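/- Let G be a finite group and k a field whose characteristic does not divide |G|. An element r of the group Hopf algebra kG satisfies the 1-dimensional partial comodule equations if and only if there exist a subgroup K ≤ G and an element g ∈ G such that r = |K|⁻¹ · Σ_{h ∈ K} g·h. (Equivalently: every 1-dimensional partial kG-comodule is a translate by a group element of the normalized integral of a subgroup of G.) -/

import Mathlib

open TensorProduct

/-- The comultiplication of the group Hopf algebra `kG`, determined by `Δ(g) = g ⊗ g`. -/
noncomputable def gaComul (k G : Type*) [Field k] [Group G] :
    MonoidAlgebra k G →ₗ[k] MonoidAlgebra k G ⊗[k] MonoidAlgebra k G :=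
  (Finsupp.lsum k fun g => LinearMap.toSpanSingleton k _
    (MonoidAlgebra.of k G g ⊗ₜ[k] MonoidAlgebra.of k G g)) ∘ₗ
    (MonoidAlgebra.coeffLinearEquiv k).toLinearMap

/-- The counit of the group Hopf algebra `kG`, determined by `ε(g) = 1`. -/
noncomputable def gaCounit (k G : Type*) [Field k] [Group G] :
    MonoidAlgebra k G →ₗ[k] k :=
  (Finsupp.lsum k fun _ : G => (LinearMap.id : k →ₗ[k] k)) ∘ₗ
    (MonoidAlgebra.coeffLinearEquiv k).toLinearMap

/-- The antipode of the group Hopf algebra `kG`, determined by `S(g) = g⁻¹`. -/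
noncomputable def gaAntipode (k G : Type*) [Field k] [Group G] :
    MonoidAlgebra k G →ₗ[k] MonoidAlgebra k G :=
  MonoidAlgebra.mapDomainLinearMap k k (fun g : G => g⁻¹)

/-- The five 1-dimensional partial comodule equations for an element `r` of the group Hopf
algebra `kG`. -/
def GAOneDimPCM (k : Type*) {G : Type*} [Field k] [Group G] (r : MonoidAlgebra k G) : Prop :=
  gaCounit k G r = 1
  ∧ r ⊗ₜ[k] (r * gaAntipode k G r)
      = gaComul k G r * ((1 : MonoidAlgebra k G) ⊗ₜ[k] gaAntipode k G r)
  ∧ (r ⊗ₜ[k] (1 : MonoidAlgebra k G)) *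
        (LinearMap.rTensor (MonoidAlgebra k G) (gaAntipode k G) (gaComul k G r))
      = (r * gaAntipode k G r) ⊗ₜ[k] r
  ∧ r ⊗ₜ[k] (gaAntipode k G r * r)
      = (LinearMap.lTensor (MonoidAlgebra k G) (gaAntipode k G) (gaComul k G r))
          * ((1 : MonoidAlgebra k G) ⊗ₜ[k] r)
  ∧ (gaAntipode k G r * r) ⊗ₜ[k] r
      = ((gaAntipode k G r) ⊗ₜ[k] (1 : MonoidAlgebra k G)) * gaComul k G r

section

variable {k G : Type*} [Field k] [Group G]

theorem gaComul_single (g : G) (a : k) :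
    gaComul k G (MonoidAlgebra.single g a) =
      a • (MonoidAlgebra.single g (1 : k) ⊗ₜ[k] MonoidAlgebra.single g (1 : k)) := by
  simp [gaComul]

theorem gaCounit_single (g : G) (a : k) : gaCounit k G (MonoidAlgebra.single g a) = a := by
  simp [gaCounit]

theorem gaAntipode_single (g : G) (a : k) :
    gaAntipode k G (MonoidAlgebra.single g a) = MonoidAlgebra.single g⁻¹ a := by
  ext
  simp [gaAntipode]

/-- Contracting the right tensor factor of `r S(r₍₁₎) ⊗ r₍₂₎` against the coordinate at `g`. -/
theorem rid_lTensor_coeff_mul_rTensor_gaAntipode (r x : MonoidAlgebra k G) (g : G) :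
    TensorProduct.rid k (MonoidAlgebra k G) (LinearMap.lTensor (MonoidAlgebra k G)
      (Finsupp.lapply g ∘ₗ (MonoidAlgebra.coeffLinearEquiv k).toLinearMap)
      ((r ⊗ₜ[k] (1 : MonoidAlgebra k G)) *
        LinearMap.rTensor (MonoidAlgebra k G) (gaAntipode k G) (gaComul k G x))) =
      x.coeff g • (r * MonoidAlgebra.single g⁻¹ (1 : k)) := by
  induction x using MonoidAlgebra.induction_linear with
  | zero => simp
  | add x y hx hy => simp only [map_add, mul_add, hx, hy, MonoidAlgebra.coeff_add,
      Finsupp.add_apply, add_smul]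
  | single h a =>
    rw [gaComul_single, map_smul, mul_smul_comm, map_smul, map_smul]
    by_cases hg : h = g
    · subst hg
      simp [gaAntipode_single]
    · simp [gaAntipode_single, hg]

theorem mul_single_inv_eq_of_mul_rTensor_eq {r : MonoidAlgebra k G}
    (h : (r ⊗ₜ[k] (1 : MonoidAlgebra k G)) *
        (LinearMap.rTensor (MonoidAlgebra k G) (gaAntipode k G) (gaComul k G r))
      = (r * gaAntipode k G r) ⊗ₜ[k] r) {g : G} (hg : r.coeff g ≠ 0) :
    r * MonoidAlgebra.single g⁻¹ (1 : k) = r * gaAntipode k G r := by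
  have key := rid_lTensor_coeff_mul_rTensor_gaAntipode r r g
  rw [h] at key
  simp only [LinearMap.lTensor_tmul, TensorProduct.rid_tmul] at key
  exact (smul_right_injective _ hg key).symm

/-- The subgroup of `G` of elements fixing `r` under right translation. -/
def rightStabilizer (r : MonoidAlgebra k G) : Subgroup G where
  carrier := {x | ∀ y, r.coeff (y * x) = r.coeff y}
  one_mem' := by simp
  mul_mem' {a b} ha hb y := by rw [← mul_assoc, hb, ha]
  inv_mem' {a} ha y := by rw [← ha (y * a⁻¹), inv_mul_cancel_right]

theorem exists_eq_smul_sum_of_gaOneDimPCM [Finite G] {r : MonoidAlgebra k G}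
    (h : GAOneDimPCM k r) : ∃ (K : Subgroup G) (g : G),
      r = (Nat.card K : k)⁻¹ •
        ∑ h ∈ (K : Set G).toFinite.toFinset, MonoidAlgebra.single (g * h) (1 : k) := by
  classical
  obtain ⟨hε, -, h₃, -, -⟩ := h
  obtain ⟨g, hg⟩ : ∃ g, r.coeff g ≠ 0 := by
    by_contra! h0
    have : r = 0 := by ext g; exact h0 g
    simp [this] at hε
  have hsupp : ∀ x, r.coeff x ≠ 0 → g⁻¹ * x ∈ rightStabilizer r := by
    intro x hx y
    have e := (mul_single_inv_eq_of_mul_rTensor_eq h₃ hx).trans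
      (mul_single_inv_eq_of_mul_rTensor_eq h₃ hg).symm
    have e' := congrArg (fun z => z.coeff (y * g⁻¹)) e
    simpa [mul_assoc] using e'
  have hr : r = r.coeff g • ∑ h ∈ (rightStabilizer r : Set G).toFinite.toFinset,
      MonoidAlgebra.single (g * h) (1 : k) := by
    ext x
    have hsum : (∑ h ∈ (rightStabilizer r : Set G).toFinite.toFinset,
        MonoidAlgebra.single (g * h) (1 : k)).coeff x =
        if g⁻¹ * x ∈ rightStabilizer r then 1 else 0 := by
      simp [Finsupp.single_apply, ← eq_inv_mul_iff_mul_eq]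
    rw [MonoidAlgebra.coeff_smul_apply, hsum]
    split_ifs with hx
    · simpa using hx g
    · simpa using not_imp_comm.1 (hsupp x) hx
  have hcard : r.coeff g * (Nat.card (rightStabilizer r) : k) = 1 := by
    have hc := congrArg (gaCounit k G) hr
    rw [hε] at hc
    simp only [map_smul, map_sum, gaCounit_single, Finset.sum_const, nsmul_eq_mul, mul_one,
      smul_eq_mul, ← Set.ncard_eq_toFinset_card] at hc
    exact hc.symm
  exact ⟨rightStabilizer r, g, by rwa [← eq_inv_of_mul_eq_one_left hcard]⟩

/-- The (unnormalized) integral of a subgroup. -/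
noncomputable def subgroupSum (k : Type*) {G : Type*} [Field k] [Group G] [Finite G]
    (K : Subgroup G) : MonoidAlgebra k G :=
  ∑ h ∈ (K : Set G).toFinite.toFinset, MonoidAlgebra.single h (1 : k)

theorem single_mul_subgroupSum [Finite G] {K : Subgroup G} {x : G} (hx : x ∈ K) :
    MonoidAlgebra.single x (1 : k) * subgroupSum k K = subgroupSum k K := by
  simp only [subgroupSum, Finset.mul_sum, MonoidAlgebra.single_mul_single, one_mul]
  exact Finset.sum_equiv (Equiv.mulLeft x) (by simp [K.mul_mem_cancel_left hx]) (by simp)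

theorem subgroupSum_mul_single [Finite G] {K : Subgroup G} {x : G} (hx : x ∈ K) :
    subgroupSum k K * MonoidAlgebra.single x (1 : k) = subgroupSum k K := by
  simp only [subgroupSum, Finset.sum_mul, MonoidAlgebra.single_mul_single, one_mul]
  exact Finset.sum_equiv (Equiv.mulRight x) (by simp [K.mul_mem_cancel_right hx]) (by simp)

theorem gaAntipode_single_mul_subgroupSum [Finite G] (K : Subgroup G) (g : G) :
    gaAntipode k G (MonoidAlgebra.single g 1 * subgroupSum k K) =
      subgroupSum k K * MonoidAlgebra.single g⁻¹ 1 := by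
  simp only [subgroupSum, Finset.sum_mul, Finset.mul_sum, map_sum, gaAntipode_single,
    MonoidAlgebra.single_mul_single, one_mul]
  exact Finset.sum_equiv (Equiv.inv G) (by simp) (by simp)

theorem subgroupSum_mul_self [Finite G] (K : Subgroup G) :
    subgroupSum k K * subgroupSum k K = (Nat.card K : k) • subgroupSum k K := by
  conv_lhs => enter [1]; rw [subgroupSum]
  rw [Finset.sum_mul, Finset.sum_congr rfl (fun x hx => single_mul_subgroupSum (by simpa using hx)),
    Finset.sum_const, ← Set.ncard_eq_toFinset_card, Nat.cast_smul_eq_nsmul]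
  rfl

theorem gaOneDimPCM_smul_sum [Finite G] (K : Subgroup G) (hK : (Nat.card K : k) ≠ 0) (g : G) :
    GAOneDimPCM k ((Nat.card K : k)⁻¹ •
      ∑ h ∈ (K : Set G).toFinite.toFinset, MonoidAlgebra.single (g * h) (1 : k)) := by
  set s := (K : Set G).toFinite.toFinset with hs
  set c := (Nat.card K : k)⁻¹
  set r := c • ∑ h ∈ s, MonoidAlgebra.single (g * h) (1 : k) with hr
  have hmem : ∀ {h}, h ∈ s → h ∈ K := by simp [hs]
  have hr' : r = c • (MonoidAlgebra.single g 1 * subgroupSum k K) := by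
    simp [hr, subgroupSum, Finset.mul_sum, hs]
  have hS : gaAntipode k G r = c • (subgroupSum k K * MonoidAlgebra.single g⁻¹ 1) := by
    rw [hr', map_smul, gaAntipode_single_mul_subgroupSum]
  have hΔ : gaComul k G r = c • ∑ h ∈ s,
      MonoidAlgebra.single (g * h) (1 : k) ⊗ₜ[k] MonoidAlgebra.single (g * h) (1 : k) := by
    simp only [hr, map_smul, map_sum, gaComul_single, one_smul]
  have split (x : G) : MonoidAlgebra.single (g * x) (1 : k) =
      MonoidAlgebra.single g 1 * MonoidAlgebra.single x 1 := by simp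
  have splitInv (x : G) : MonoidAlgebra.single (g * x)⁻¹ (1 : k) =
      MonoidAlgebra.single x⁻¹ 1 * MonoidAlgebra.single g⁻¹ 1 := by simp
  have hg : MonoidAlgebra.single g⁻¹ (1 : k) * MonoidAlgebra.single g 1 = 1 := by
    simp [MonoidAlgebra.one_def]
  have hrS : r * gaAntipode k G r = c • (MonoidAlgebra.single g 1 * subgroupSum k K *
      MonoidAlgebra.single g⁻¹ 1) := by
    rw [hS, hr', smul_mul_smul_comm, ← mul_assoc, mul_assoc (MonoidAlgebra.single g 1),
      subgroupSum_mul_self, mul_smul_comm, smul_mul_assoc, smul_smul, mul_assoc c,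
      inv_mul_cancel₀ hK, mul_one]
  have hSr : gaAntipode k G r * r = c • subgroupSum k K := by
    rw [hS, hr', smul_mul_smul_comm, mul_assoc, ← mul_assoc (MonoidAlgebra.single g⁻¹ 1), hg,
      one_mul, subgroupSum_mul_self, smul_smul, mul_assoc c, inv_mul_cancel₀ hK, mul_one]
  have h₂ : ∀ x ∈ K, MonoidAlgebra.single (g * x) (1 : k) * gaAntipode k G r =
      r * gaAntipode k G r := by
    intro x hx
    rw [hrS, hS, split, mul_smul_comm, ← mul_assoc, mul_assoc (MonoidAlgebra.single g 1),
      single_mul_subgroupSum hx]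
  have h₃ : ∀ x ∈ K, r * MonoidAlgebra.single (g * x)⁻¹ (1 : k) = r * gaAntipode k G r := by
    intro x hx
    rw [hrS, hr', splitInv, smul_mul_assoc, ← mul_assoc, mul_assoc (MonoidAlgebra.single g 1),
      subgroupSum_mul_single (K.inv_mem hx)]
  have h₄ : ∀ x ∈ K, MonoidAlgebra.single (g * x)⁻¹ (1 : k) * r = gaAntipode k G r * r := by
    intro x hx
    rw [hSr, hr', splitInv, mul_smul_comm, mul_assoc, ← mul_assoc (MonoidAlgebra.single g⁻¹ 1),
      hg, one_mul, single_mul_subgroupSum (K.inv_mem hx)]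
  have h₅ : ∀ x ∈ K, gaAntipode k G r * MonoidAlgebra.single (g * x) (1 : k) =
      gaAntipode k G r * r := by
    intro x hx
    rw [hSr, hS, split, smul_mul_assoc, mul_assoc, ← mul_assoc (MonoidAlgebra.single g⁻¹ 1),
      hg, one_mul, subgroupSum_mul_single hx]
  clear_value r
  refine ⟨?_, ?_, ?_, ?_, ?_⟩
  · simp only [hr, map_smul, map_sum, gaCounit_single, Finset.sum_const, nsmul_eq_mul, mul_one,
      smul_eq_mul, hs, ← Set.ncard_eq_toFinset_card]
    exact inv_mul_cancel₀ hK
  · rw [hΔ, smul_mul_assoc, Finset.sum_mul]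
    simp only [Algebra.TensorProduct.tmul_mul_tmul, mul_one]
    rw [Finset.sum_congr rfl fun x hx => by rw [h₂ x (hmem hx)], ← TensorProduct.sum_tmul,
      TensorProduct.smul_tmul', ← hr]
  · rw [hΔ, map_smul, map_sum, mul_smul_comm, Finset.mul_sum]
    simp only [LinearMap.rTensor_tmul, gaAntipode_single, Algebra.TensorProduct.tmul_mul_tmul,
      one_mul]
    rw [Finset.sum_congr rfl fun x hx => by rw [h₃ x (hmem hx)], ← TensorProduct.tmul_sum,
      ← TensorProduct.tmul_smul, ← hr]
  · rw [hΔ, map_smul, map_sum, smul_mul_assoc, Finset.sum_mul]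
    simp only [LinearMap.lTensor_tmul, gaAntipode_single, Algebra.TensorProduct.tmul_mul_tmul,
      mul_one]
    rw [Finset.sum_congr rfl fun x hx => by rw [h₄ x (hmem hx)], ← TensorProduct.sum_tmul,
      TensorProduct.smul_tmul', ← hr]
  · rw [hΔ, mul_smul_comm, Finset.mul_sum]
    simp only [Algebra.TensorProduct.tmul_mul_tmul, one_mul]
    rw [Finset.sum_congr rfl fun x hx => by rw [h₅ x (hmem hx)], ← TensorProduct.tmul_sum,
      ← TensorProduct.tmul_smul, ← hr]

end

/-- let `G` be a finite group and `k` a field with `char k ∤ |G|`. An element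
`r ∈ kG` satisfies the 1-dimensional partial comodule equations if and only if there are a
subgroup `K ≤ G` and an element `g ∈ G` with `r = |K|⁻¹ · Σ_{h ∈ K} g·h`. -/
theorem stmt19 (k G : Type*) [Field k] [Group G] [Fintype G]
    (hchar : (Fintype.card G : k) ≠ 0)
    (r : MonoidAlgebra k G) :
    GAOneDimPCM k r
    ↔ ∃ (K : Subgroup G) (g : G),
        r = (Nat.card K : k)⁻¹ •
          ∑ h ∈ (K : Set G).toFinite.toFinset, MonoidAlgebra.single (g * h) (1 : k) := by
  refine ⟨exists_eq_smul_sum_of_gaOneDimPCM, ?_⟩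
  rintro ⟨K, g, rfl⟩
  refine gaOneDimPCM_smul_sum K (fun hK => hchar ?_) g
  obtain ⟨m, hm⟩ := K.card_subgroup_dvd_card
  rw [← Nat.card_eq_fintype_card, hm, Nat.cast_mul, hK, zero_mul]
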